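/- arXiv:2002.11961 — 3 statements merged into one kernel-verified Lean document; each statement's English description precedes it below -/
import Mathlib

section
/- Let X be an infinite-dimensional real Banach space. Then there exist nonempty sets A, B ⊆ X such that A and B are each simultaneously approximatively compact, the sum A + B is closed, and A + B is not simultaneously proximinal. -/
/-!
In an infinite-dimensional space there are points `z m` at mutual distance at least `1` whose norms
are greater than `1` and tend to `1`, so `0` has no nearest point in `Set.range z`. Take `A = ℤ v`
with `‖v‖` large and `B = {z m - m v}`. Both have only finitely many points in each ball, which
makes them simultaneously approximatively compact. Shearing `Set.range z` along `A` does not change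
its sum with `A`, so `A + B = A + Set.range z`: widely spaced copies of `Set.range z`. This set is
still uniformly discrete, hence closed, and the points nearest to `0` would have to lie in the copy
`Set.range z`.
-/

open Filter Topology Pointwise

variable {X : Type*} [NormedAddCommGroup X] [NormedSpace ℝ X]

/-- `simSup A y = sup_{a ∈ A} ‖a - y‖`. -/
noncomputable def simSup (A : Set X) (y : X) : ℝ := ⨆ a : A, ‖(a : X) - y‖

/-- `simDist A C = inf_{y ∈ C} sup_{a ∈ A} ‖a - y‖`. -/
noncomputable def simDist (A C : Set X) : ℝ := ⨅ y : C, simSup A (y : X)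

/-- The set of best simultaneous approximations `P_C(A)`. -/
def simBest (A C : Set X) : Set X := {y | y ∈ C ∧ simSup A y = simDist A C}

/-- The set `P_C(A, δ)`. -/
def simBestApprox (A C : Set X) (δ : ℝ) : Set X :=
  {y | y ∈ C ∧ simSup A y < simDist A C + δ}

/-- `C` is simultaneously proximinal. -/
def SimProximinal (C : Set X) : Prop :=
  ∀ A : Set X, A.Nonempty → Bornology.IsBounded A → (simBest A C).Nonempty

/-- `y` is a minimizing sequence in `C` for `A`. -/
def IsMinimizing (A C : Set X) (y : ℕ → X) : Prop :=
  (∀ n, y n ∈ C) ∧ Tendsto (fun n => simSup A (y n)) atTop (𝓝 (simDist A C))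

/-- Weak convergence of a sequence. -/
def WeakTendsto (y : ℕ → X) (c : X) : Prop :=
  ∀ f : X →L[ℝ] ℝ, Tendsto (fun n => f (y n)) atTop (𝓝 (f c))

/-- `C` is simultaneously approximatively compact. -/
def SimApproxCompact (C : Set X) : Prop :=
  ∀ A : Set X, A.Nonempty → Bornology.IsBounded A → ∀ y : ℕ → X, IsMinimizing A C y →
    ∃ c ∈ C, ∃ φ : ℕ → ℕ, StrictMono φ ∧ Tendsto (y ∘ φ) atTop (𝓝 c)

/-- `C` is simultaneously approximatively weakly compact. -/
def SimApproxWeakCompact (C : Set X) : Prop :=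
  ∀ A : Set X, A.Nonempty → Bornology.IsBounded A → ∀ y : ℕ → X, IsMinimizing A C y →
    ∃ c ∈ C, ∃ φ : ℕ → ℕ, StrictMono φ ∧ WeakTendsto (y ∘ φ) c

/-- `C` is simultaneously strongly proximinal. -/
def SimStronglyProximinal (C : Set X) : Prop :=
  SimProximinal C ∧ ∀ A : Set X, A.Nonempty → Bornology.IsBounded A → ∀ ε > (0 : ℝ),
    ∃ δ > (0 : ℝ), simBestApprox A C δ ⊆ simBest A C + Metric.closedBall (0 : X) ε

/-- `C` is simultaneously weakly strongly proximinal. -/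
def SimWeakStronglyProximinal (C : Set X) : Prop :=
  SimProximinal C ∧ ∀ A : Set X, A.Nonempty → Bornology.IsBounded A →
    ∀ V : Set X, V ∈ 𝓝 (0 : WeakSpace ℝ X) → ∃ δ > (0 : ℝ),
      simBestApprox A C δ ⊆ simBest A C + V

section SimultaneousApproximation

variable {E : Type*} [NormedAddCommGroup E] {A C : Set E}

lemma norm_sub_le_simSup (hA : Bornology.IsBounded A) {a : E} (ha : a ∈ A) (y : E) :
    ‖a - y‖ ≤ simSup A y := by
  obtain ⟨K, hK⟩ := hA.exists_norm_le
  have hbdd : BddAbove (Set.range fun b : A => ‖(b : E) - y‖) := by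
    refine ⟨K + ‖y‖, ?_⟩
    rintro _ ⟨b, rfl⟩
    exact (norm_sub_le _ _).trans (by gcongr; exact hK b b.2)
  exact le_ciSup hbdd ⟨a, ha⟩

lemma simSup_singleton (x y : E) : simSup {x} y = dist x y := by
  rw [simSup, ciSup_unique, dist_eq_norm]
  rfl

lemma simDist_singleton (x : E) (C : Set E) : simDist {x} C = Metric.infDist x C := by
  simp only [simDist, simSup_singleton, Metric.infDist_eq_iInf]

lemma IsMinimizing.isBounded_range {y : ℕ → E} (hy : IsMinimizing A C y) (hne : A.Nonempty)
    (hA : Bornology.IsBounded A) : Bornology.IsBounded (Set.range y) := by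
  obtain ⟨a, ha⟩ := hne
  obtain ⟨M, hM⟩ := hy.2.bddAbove_range
  refine (Metric.isBounded_iff_subset_closedBall a).2 ⟨M, ?_⟩
  rintro _ ⟨n, rfl⟩
  rw [Metric.mem_closedBall', dist_eq_norm]
  exact (norm_sub_le_simSup hA ha (y n)).trans (hM ⟨n, rfl⟩)

lemma simApproxCompact_of_isCompact_inter_closedBall
    (hC : ∀ R : ℝ, IsCompact (C ∩ Metric.closedBall 0 R)) : SimApproxCompact C := by
  intro A hne hA y hy
  obtain ⟨R, hR⟩ := (hy.isBounded_range hne hA).subset_closedBall 0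
  obtain ⟨c, hc, φ, hφ, hlim⟩ :=
    (hC R).tendsto_subseq fun n => ⟨hy.1 n, hR (Set.mem_range_self n)⟩
  exact ⟨c, hc.1, φ, hφ, hlim⟩

lemma simApproxCompact_range {ι : Type*} {a : ι → E}
    (ha : Tendsto a cofinite (Bornology.cobounded E)) : SimApproxCompact (Set.range a) := by
  refine simApproxCompact_of_isCompact_inter_closedBall fun R => Set.Finite.isCompact ?_
  have hfin : (a ⁻¹' Metric.closedBall 0 R).Finite := by
    have hmem := ha (Bornology.isBounded_def.1 (Metric.isBounded_closedBall (x := 0) (r := R)))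
    rwa [mem_map, mem_cofinite, Set.preimage_compl, compl_compl] at hmem
  rw [Set.inter_comm, ← Set.image_preimage_eq_inter_range]
  exact hfin.image a

lemma not_simProximinal_of_tendsto_dist {ι : Type*} {l : Filter ι} [l.NeBot] {x : E} {z : ι → E}
    {r : ℝ} (hz : ∀ i, z i ∈ C) (hlim : Tendsto (fun i => dist x (z i)) l (𝓝 r))
    (hr : ∀ y ∈ C, r < dist x y) : ¬ SimProximinal C := by
  intro hC
  obtain ⟨y, hy, hmin⟩ := hC {x} (Set.singleton_nonempty x) Bornology.isBounded_singleton
  rw [simSup_singleton, simDist_singleton] at hmin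
  have hle : Metric.infDist x C ≤ r :=
    ge_of_tendsto' hlim fun i => Metric.infDist_le_dist_of_mem (hz i)
  exact (hr y hy).not_ge (hmin.trans_le hle)

end SimultaneousApproximation

section Shear

lemma addSubgroup_add_range_sub {G ι : Type*} [AddCommGroup G] (H : AddSubgroup G) {g : ι → G}
    (hg : ∀ i, g i ∈ H) (z : ι → G) :
    (H : Set G) + Set.range (fun i => z i - g i) = H + Set.range z := by
  apply Set.Subset.antisymm
  · rintro _ ⟨h, hh, _, ⟨i, rfl⟩, rfl⟩
    exact ⟨h - g i, H.sub_mem hh (hg i), z i, ⟨i, rfl⟩, by simp only; abel⟩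
  · rintro _ ⟨h, hh, _, ⟨i, rfl⟩, rfl⟩
    exact ⟨h + g i, H.add_mem hh (hg i), z i - g i, ⟨i, rfl⟩, by simp only; abel⟩

variable {E : Type*} [SeminormedAddCommGroup E] {S : Set E} {r R : ℝ}

lemma lt_norm_of_mem_add {H : Set E} (hH : ∀ h ∈ H, h ≠ 0 → r + R < ‖h‖)
    (hr : ∀ s ∈ S, r < ‖s‖) (hR : ∀ s ∈ S, ‖s‖ ≤ R) : ∀ y ∈ H + S, r < ‖y‖ := by
  rintro _ ⟨h, hh, s, hs, rfl⟩
  rcases eq_or_ne h 0 with rfl | h0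
  · simpa only [zero_add] using hr s hs
  · have := norm_le_add_norm_add h s
    linarith [hH h hh h0, hR s hs]

lemma pairwise_le_dist_addSubgroup_add {H : AddSubgroup E}
    (hH : ∀ h ∈ H, h ≠ 0 → r + 2 * R ≤ ‖h‖) (hS : S.Pairwise fun s t => r ≤ dist s t)
    (hR : ∀ s ∈ S, ‖s‖ ≤ R) : ((H : Set E) + S).Pairwise fun x y => r ≤ dist x y := by
  rintro _ ⟨h, hh, s, hs, rfl⟩ _ ⟨k, hk, t, ht, rfl⟩ hne
  rcases eq_or_ne h k with rfl | hhk
  · simpa only [dist_add_left] using hS hs ht fun hst => hne (by rw [hst])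
  · have hsep : r + 2 * R ≤ ‖h - k‖ := hH _ (H.sub_mem hh hk) (sub_ne_zero.2 hhk)
    have hst : ‖s - t‖ ≤ R + R := norm_sub_le_of_le (hR s hs) (hR t ht)
    have htri := norm_le_add_norm_add (h - k) (s - t)
    rw [dist_eq_norm, add_sub_add_comm]
    linarith

lemma tendsto_sub_cobounded_of_isBounded_range {ι : Type*} {l : Filter ι} {f g : ι → E}
    (hf : Bornology.IsBounded (Set.range f)) (hg : Tendsto g l (Bornology.cobounded E)) :
    Tendsto (fun i => f i - g i) l (Bornology.cobounded E) := by
  obtain ⟨R, hR⟩ := hf.exists_norm_le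
  rw [← tendsto_norm_atTop_iff_cobounded] at hg ⊢
  refine tendsto_atTop_mono (fun i => ?_) (tendsto_atTop_add_const_right l (-R) hg)
  have := norm_sub_norm_le (g i) (f i)
  rw [norm_sub_rev] at this
  linarith [hR (f i) ⟨i, rfl⟩]

end Shear

section Multiples

variable {E : Type*} [NormedAddCommGroup E] [NormedSpace ℝ E] {v : E}

lemma tendsto_zsmul_cobounded (hv : v ≠ 0) :
    Tendsto (fun k : ℤ => k • v) cofinite (Bornology.cobounded E) := by
  have hnorm : Tendsto (fun k : ℤ => ‖k‖) cofinite atTop := by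
    rw [← Filter.cocompact_eq_cofinite]
    exact tendsto_norm_cocompact_atTop
  rw [← tendsto_norm_atTop_iff_cobounded]
  simpa only [norm_zsmul ℝ, Int.norm_cast_real] using hnorm.atTop_mul_const (norm_pos_iff.2 hv)

lemma norm_le_norm_of_mem_zmultiples {h : E} (hh : h ∈ AddSubgroup.zmultiples v) (h0 : h ≠ 0) :
    ‖v‖ ≤ ‖h‖ := by
  obtain ⟨k, rfl⟩ := AddSubgroup.mem_zmultiples_iff.1 hh
  have hk : 1 ≤ ‖k‖ := by
    rw [Int.norm_eq_abs]
    exact_mod_cast Int.one_le_abs fun hk => h0 (by rw [hk, zero_smul])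
  rw [norm_zsmul ℝ, Int.norm_cast_real]
  exact le_mul_of_one_le_left (norm_nonneg v) hk

lemma exists_simApproxCompact_add_eq_zmultiples_add_range {ι : Type*} [Countable ι]
    [Nonempty ι] {z : ι → E} (hz : Bornology.IsBounded (Set.range z)) (hv : v ≠ 0) :
    ∃ A B : Set E, A.Nonempty ∧ B.Nonempty ∧ SimApproxCompact A ∧ SimApproxCompact B ∧
      A + B = (AddSubgroup.zmultiples v : Set E) + Set.range z := by
  obtain ⟨f, hf⟩ := Countable.exists_injective_nat ι
  have hmul := tendsto_zsmul_cobounded hv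
  have hshear := tendsto_sub_cobounded_of_isBounded_range hz
    (hmul.comp ((Nat.cast_injective (R := ℤ)).comp hf).tendsto_cofinite)
  exact ⟨AddSubgroup.zmultiples v, _, ⟨0, zero_mem _⟩, Set.range_nonempty _,
    simApproxCompact_range hmul, simApproxCompact_range hshear, addSubgroup_add_range_sub _
      (fun i => AddSubgroup.zsmul_mem_zmultiples v (f i)) z⟩

end Multiples

section Riesz

variable {𝕜 E : Type*} [DenselyNormedField 𝕜] [CompleteSpace 𝕜] [NormedAddCommGroup E]
  [NormedSpace 𝕜 E]

lemma exists_one_lt_norm_lt_one_le_dist_of_finset (h : ¬ FiniteDimensional 𝕜 E) {R : ℝ}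
    (hR : 1 < R) (s : Finset E) : ∃ x : E, 1 < ‖x‖ ∧ ‖x‖ < R ∧ ∀ y ∈ s, 1 ≤ dist y x := by
  classical
  obtain ⟨c, hc, hcR⟩ : ∃ c : 𝕜, 1 < ‖c‖ ∧ ‖c‖ < √R :=
    NormedField.exists_lt_norm_lt 𝕜 zero_le_one (Real.lt_sqrt_of_sq_lt (by simpa using hR))
  have hc0 : c ≠ 0 := norm_pos_iff.1 (one_pos.trans hc)
  -- Riesz's lemma only gives `1 ≤ ‖x‖`; the norm of `c • x` is greater than `1`.
  obtain ⟨x, hxR, hx⟩ :=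
    exists_norm_le_le_norm_sub_of_finset hc hcR h (insert 0 (s.image (c⁻¹ • ·)))
  have hx1 : 1 ≤ ‖x‖ := by simpa using hx 0 (Finset.mem_insert_self _ _)
  refine ⟨c • x, ?_, ?_, fun y hy => ?_⟩
  · rw [norm_smul]
    exact one_lt_mul_of_lt_of_le hc hx1
  · calc ‖c • x‖ = ‖c‖ * ‖x‖ := norm_smul c x
      _ < √R * √R := mul_lt_mul hcR hxR (one_pos.trans_le hx1) (Real.sqrt_nonneg R)
      _ = R := Real.mul_self_sqrt (by linarith)
  · have hyx : 1 ≤ ‖c⁻¹ • y - x‖ :=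
      hx _ (Finset.mem_insert_of_mem (Finset.mem_image_of_mem _ hy))
    calc 1 ≤ ‖c‖ * ‖c⁻¹ • y - x‖ := one_le_mul_of_one_le_of_one_le hc.le hyx
      _ = dist y (c • x) := by rw [← norm_smul, smul_sub, smul_inv_smul₀ hc0, dist_eq_norm]

lemma exists_seq_one_lt_norm_tendsto_one_pairwise_one_le_dist (h : ¬ FiniteDimensional 𝕜 E) :
    ∃ z : ℕ → E, (∀ n, 1 < ‖z n‖) ∧ Tendsto (fun n => ‖z n‖) atTop (𝓝 1) ∧
      Pairwise fun m n => 1 ≤ dist (z m) (z n) := by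
  classical
  -- The choice of a new point sees only the set of earlier ones, so each point carries the index
  -- of its norm bound, and these indices are made to increase.
  obtain ⟨p, hp, hsep⟩ := exists_seq_of_forall_finset_exists
    (fun p : ℕ × E => 1 < ‖p.2‖ ∧ ‖p.2‖ < 1 + 1 / ((p.1 : ℝ) + 1))
    (fun p q => p.1 < q.1 ∧ 1 ≤ dist p.2 q.2) fun s _ => by
      obtain ⟨N, hN⟩ := (s.image Prod.fst).exists_nat_subset_range
      obtain ⟨x, hx1, hxN, hx⟩ := exists_one_lt_norm_lt_one_le_dist_of_finset h
        (lt_add_of_pos_right 1 (Nat.one_div_pos_of_nat (n := N))) (s.image Prod.snd)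
      exact ⟨(N, x), ⟨hx1, hxN⟩, fun q hq =>
        ⟨Finset.mem_range.1 (hN (Finset.mem_image_of_mem _ hq)),
          hx _ (Finset.mem_image_of_mem _ hq)⟩⟩
  have hmono : StrictMono fun n => (p n).1 := fun m n hmn => (hsep m n hmn).1
  refine ⟨fun n => (p n).2, fun n => (hp n).1, ?_, fun m n hmn => ?_⟩
  · have hbound : Tendsto (fun n => 1 + 1 / (((p n).1 : ℝ) + 1)) atTop (𝓝 1) := by
      simpa only [add_zero, Function.comp_apply] using
        (tendsto_one_div_add_atTop_nhds_zero_nat.comp hmono.tendsto_atTop).const_add (1 : ℝ)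
    exact tendsto_of_tendsto_of_tendsto_of_le_of_le tendsto_const_nhds hbound
      (fun n => (hp n).1.le) fun n => (hp n).2.le
  · rcases hmn.lt_or_gt with hlt | hgt
    · exact (hsep m n hlt).2
    · rw [dist_comm]
      exact (hsep n m hgt).2

end Riesz

theorem exists_simApproxCompact_sum_closed_not_simProximinal_general
    (h : ¬ FiniteDimensional ℝ X) :
    ∃ A B : Set X, A.Nonempty ∧ B.Nonempty ∧ SimApproxCompact A ∧ SimApproxCompact B ∧
      IsClosed (A + B) ∧ ¬ SimProximinal (A + B) := by
  obtain ⟨z, hz1, hzlim, hzsep⟩ := exists_seq_one_lt_norm_tendsto_one_pairwise_one_le_dist h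
  obtain ⟨R, hR⟩ := hzlim.bddAbove_range
  have hzR : ∀ y ∈ Set.range z, ‖y‖ ≤ R := Set.forall_mem_range.2 fun n => hR ⟨n, rfl⟩
  have : Nontrivial X := ⟨z 0, 0, norm_pos_iff.1 (one_pos.trans (hz1 0))⟩
  obtain ⟨v, hv⟩ := NormedSpace.exists_lt_norm ℝ X (1 + 2 * R)
  have hR1 : 1 < R := (hz1 0).trans_le (hR ⟨0, rfl⟩)
  obtain ⟨A, B, hAne, hBne, hA, hB, hsum⟩ := exists_simApproxCompact_add_eq_zmultiples_add_range
    (isBounded_iff_forall_norm_le.2 ⟨R, hzR⟩) (norm_pos_iff.1 (by linarith : 0 < ‖v‖))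
  have hgap : ∀ x ∈ AddSubgroup.zmultiples v, x ≠ 0 → 1 + 2 * R < ‖x‖ := fun x hx hx0 =>
    hv.trans_le (norm_le_norm_of_mem_zmultiples hx hx0)
  refine ⟨A, B, hAne, hBne, hA, hB, hsum ▸ ?_, hsum ▸ ?_⟩
  · exact Metric.isClosed_of_pairwise_le_dist one_pos <| pairwise_le_dist_addSubgroup_add
      (fun x hx hx0 => (hgap x hx hx0).le) hzsep.range_pairwise hzR
  · refine not_simProximinal_of_tendsto_dist (x := 0) (z := z) (r := 1)
      (fun n => ⟨0, zero_mem _, z n, ⟨n, rfl⟩, zero_add _⟩) (by simpa only [dist_zero_left]) ?_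
    simpa only [dist_zero_left] using lt_norm_of_mem_add
      (fun x hx hx0 => by linarith [hgap x hx hx0]) (Set.forall_mem_range.2 hz1) hzR

/-- In any infinite-dimensional Banach space there are two simultaneously approximatively
compact sets whose sum is closed but not simultaneously proximinal. -/
theorem exists_simApproxCompact_sum_closed_not_simProximinal [CompleteSpace X]
    (h : ¬ FiniteDimensional ℝ X) :
    ∃ A B : Set X, A.Nonempty ∧ B.Nonempty ∧ SimApproxCompact A ∧ SimApproxCompact B ∧
      IsClosed (A + B) ∧ ¬ SimProximinal (A + B) :=
  exists_simApproxCompact_sum_closed_not_simProximinal_general h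
end

section
/- Let X be a real Banach space and let C, D ⊆ X be nonempty convex sets such that C is compact and D is simultaneously approximatively weakly compact. Then C + D is simultaneously approximatively weakly compact. -/
/-!
Write a minimizing sequence for `A` in `C + D` as `c n + d n` and pass to a subsequence along which
`c n → c₀ ∈ C`. As `simSup A` is Lipschitz, `c₀ + d n` is again minimizing in `C + D`, hence in the
smaller set `c₀ + D`, which as a translate of `D` is simultaneously approximatively weakly compact.
So `c₀ + d n` has a weakly convergent subsequence, and `c n + d n` is norm-asymptotic to it.
-/

open Filter Topology Pointwise

variable {X : Type*} [NormedAddCommGroup X] [NormedSpace ℝ X]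

open scoped Uniformity

section Minimizing

variable {E : Type*} [NormedAddCommGroup E] {A C D : Set E} {y z : ℕ → E}

lemma bddAbove_range_norm_sub (hA : Bornology.IsBounded A) (y : E) :
    BddAbove (Set.range fun a : A => ‖(a : E) - y‖) := by
  obtain ⟨R, hR⟩ := hA.exists_norm_le
  refine ⟨R + ‖y‖, ?_⟩
  rintro _ ⟨a, rfl⟩
  exact (norm_sub_le _ _).trans (by gcongr; exact hR a a.2)

lemma simSup_nonneg (A : Set E) (y : E) : 0 ≤ simSup A y :=
  Real.iSup_nonneg fun _ => norm_nonneg _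

lemma lipschitzWith_simSup (hA : Bornology.IsBounded A) : LipschitzWith 1 (simSup A) := by
  refine LipschitzWith.of_le_add fun y z => Real.iSup_le (fun a => ?_)
    (add_nonneg (simSup_nonneg A z) dist_nonneg)
  calc ‖(a : E) - y‖ ≤ ‖(a : E) - z‖ + ‖z - y‖ := norm_sub_le_norm_sub_add_norm_sub _ _ _
    _ ≤ simSup A z + dist y z := by
      rw [dist_eq_norm', simSup]
      gcongr
      exact le_ciSup (bddAbove_range_norm_sub hA z) a

lemma simSup_vadd_add (c : E) (A : Set E) (y : E) : simSup (c +ᵥ A) (c + y) = simSup A y := by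
  have hsurj := Set.surjective_mapsTo_image_restrict (c + ·) A
  rw [simSup, simSup, ← Set.image_vadd]
  simpa using (hsurj.iSup_comp fun a => ‖(a : E) - (c + y)‖).symm

lemma simDist_vadd (c : E) (A C : Set E) : simDist (c +ᵥ A) (c +ᵥ C) = simDist A C := by
  have hsurj := Set.surjective_mapsTo_image_restrict (c + ·) C
  rw [simDist, simDist, ← Set.image_vadd (t := C)]
  simpa [simSup_vadd_add] using (hsurj.iInf_comp fun y => simSup (c +ᵥ A) y).symm

lemma bddBelow_range_simSup (A C : Set E) : BddBelow (Set.range fun y : C => simSup A (y : E)) :=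
  ⟨0, Set.forall_mem_range.2 fun y => simSup_nonneg A y⟩

lemma simDist_le_simSup (A : Set E) {y : E} (hy : y ∈ C) : simDist A C ≤ simSup A y :=
  ciInf_le (bddBelow_range_simSup A C) ⟨y, hy⟩

lemma simDist_anti (A : Set E) (hD : D.Nonempty) (hDC : D ⊆ C) : simDist A C ≤ simDist A D :=
  have : Nonempty D := hD.to_subtype
  le_ciInf fun y => simDist_le_simSup A (hDC y.2)

namespace IsMinimizing

lemma comp_tendsto (hy : IsMinimizing A C y) {φ : ℕ → ℕ} (hφ : Tendsto φ atTop atTop) :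
    IsMinimizing A C (y ∘ φ) :=
  ⟨fun n => hy.1 (φ n), hy.2.comp hφ⟩

lemma mono (hy : IsMinimizing A C y) (hDC : D ⊆ C) (hyD : ∀ n, y n ∈ D) : IsMinimizing A D y := by
  have hdist : simDist A D = simDist A C :=
    le_antisymm (ge_of_tendsto' hy.2 fun n => simDist_le_simSup A (hyD n))
      (simDist_anti A ⟨y 0, hyD 0⟩ hDC)
  exact ⟨hyD, hdist ▸ hy.2⟩

lemma congr_uniformity (hy : IsMinimizing A C y) (hA : Bornology.IsBounded A)
    (hyz : Tendsto (fun n => (y n, z n)) atTop (𝓤 E)) (hz : ∀ n, z n ∈ C) : IsMinimizing A C z :=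
  ⟨hz, hy.2.congr_uniformity (Tendsto.comp (lipschitzWith_simSup hA).uniformContinuous hyz)⟩

lemma vadd (hy : IsMinimizing A C y) (c : E) :
    IsMinimizing (c +ᵥ A) (c +ᵥ C) (fun n => c + y n) :=
  ⟨fun n => Set.vadd_mem_vadd_set (hy.1 n),
    by simpa only [simSup_vadd_add, simDist_vadd] using hy.2⟩

end IsMinimizing

end Minimizing

lemma WeakTendsto.const_add {y : ℕ → X} {a : X} (hy : WeakTendsto y a) (c : X) :
    WeakTendsto (fun n => c + y n) (c + a) := fun f => by
  simpa only [map_add] using (hy f).const_add (f c)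

lemma WeakTendsto.congr_uniformity {y z : ℕ → X} {a : X} (hy : WeakTendsto y a)
    (hyz : Tendsto (fun n => (y n, z n)) atTop (𝓤 X)) : WeakTendsto z a :=
  fun f => (hy f).congr_uniformity (Tendsto.comp f.uniformContinuous hyz)

lemma SimApproxWeakCompact.vadd {D : Set X} (hD : SimApproxWeakCompact D) (c : X) :
    SimApproxWeakCompact (c +ᵥ D) := by
  intro A hA hAb y hy
  have hy' : IsMinimizing (-c +ᵥ A) D (fun n => -c + y n) := by
    simpa only [neg_vadd_vadd] using hy.vadd (-c)
  obtain ⟨d, hd, φ, hφ, hlim⟩ := hD _ hA.vadd_set (hAb.vadd (-c)) _ hy'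
  refine ⟨c + d, Set.vadd_mem_vadd_set hd, φ, hφ, ?_⟩
  simpa [Function.comp_def] using hlim.const_add c

theorem compact_add_simApproxWeakCompact_general {C D : Set X} (hC : IsCompact C)
    (hD : SimApproxWeakCompact D) : SimApproxWeakCompact (C + D) := by
  intro A hA hAb y hy
  choose c hc d hd hcd using fun n => Set.mem_add.1 (hy.1 n)
  obtain ⟨c₀, hc₀, φ, hφ, hcφ⟩ := hC.tendsto_subseq hc
  have hyz : Tendsto (fun n => (y (φ n), c₀ + d (φ n))) atTop (𝓤 X) := by
    rw [tendsto_uniformity_iff_dist_tendsto_zero]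
    simpa [← hcd] using tendsto_iff_dist_tendsto_zero.1 hcφ
  have hsub : c₀ +ᵥ D ⊆ C + D := Set.vadd_set_subset_add hc₀
  have hz_mem : ∀ n, c₀ + d (φ n) ∈ c₀ +ᵥ D := fun n => Set.vadd_mem_vadd_set (hd (φ n))
  have hz : IsMinimizing A (c₀ +ᵥ D) (fun n => c₀ + d (φ n)) :=
    ((hy.comp_tendsto hφ.tendsto_atTop).congr_uniformity hAb hyz fun n => hsub (hz_mem n)).mono
      hsub hz_mem
  obtain ⟨e, he, ψ, hψ, hlim⟩ := hD.vadd c₀ A hA hAb _ hz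
  exact ⟨e, hsub he, φ ∘ ψ, hφ.comp hψ,
    hlim.congr_uniformity (hyz.uniformity_symm.comp hψ.tendsto_atTop)⟩

/-- The sum of a compact convex set and a simultaneously approximatively weakly compact convex
set is simultaneously approximatively weakly compact. -/
theorem compact_add_simApproxWeakCompact [CompleteSpace X]
    (C D : Set X) (hCne : C.Nonempty) (hDne : D.Nonempty)
    (hCc : Convex ℝ C) (hDc : Convex ℝ D)
    (hC : IsCompact C) (hD : SimApproxWeakCompact D) :
    SimApproxWeakCompact (C + D) :=
  compact_add_simApproxWeakCompact_general hC hD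
end

section
/- Let X be a real Banach space and let (x_n) be a bounded sequence in X with no weakly convergent subsequence. Then (x_n) has a subsequence (y_k) satisfying the James condition: there exists θ > 0 such that dist(co{y_1, …, y_k}, co{y_{k+1}, y_{k+2}, …}) ≥ θ for every k ∈ ℕ. -/
/-!
A weakly compact set is weakly sequentially compact (Šmulian): on a separable subspace countably
many functionals separate points, so weakly compact sets are metrizable there. Hence, if no
subsequence converges weakly, the weak closure of the range of the sequence is not compact, and by
Banach-Alaoglu the weak-star closure of the range in the bidual contains some `F` outside `X`, which
is a cluster point of the sequence. As `X` is complete, it is norm closed in the bidual, so `F` has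
distance greater than some `θ > 0` from `X`.

If `K ⊆ X` is norm compact and `B` is the unit ball of the bidual, then `K + θ B` is weak-star
compact and misses `F`, so `F` has a convex weak-star neighbourhood staying at distance greater than
`θ` from `K`. Applying this to the convex hulls of the initial segments of the sequence, and
choosing each new term in the neighbourhoods attached to the terms already chosen, gives the James
condition.
-/

open Filter Topology Pointwise

variable {X : Type*} [NormedAddCommGroup X] [NormedSpace ℝ X]

theorem weakTendsto_iff_tendsto_toWeakSpace {y : ℕ → X} {c : X} :
    WeakTendsto y c ↔ Tendsto (toWeakSpace ℝ X ∘ y) atTop (𝓝 (toWeakSpace ℝ X c)) :=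
  (WeakBilin.tendsto_iff_forall_eval_tendsto (topDualPairing ℝ X).flip fun _ _ h =>
    (SeparatingDual.eq_iff_forall_dual_eq (R := ℝ)).2 (LinearMap.congr_fun h)).symm

section Smulian

variable (𝕜 : Type*) {E : Type*} [RCLike 𝕜] [NormedAddCommGroup E] [NormedSpace 𝕜 E]

theorem exists_countable_dual_separating {s : Set E} (hs : TopologicalSpace.IsSeparable s) :
    ∃ D : Set (StrongDual 𝕜 E), D.Countable ∧ ∀ y ∈ s, (∀ f ∈ D, f y = 0) → y = 0 := by
  obtain ⟨t, ht, hst⟩ := hs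
  choose f hf_norm hf_apply using fun w : E => exists_dual_vector'' 𝕜 w
  refine ⟨f '' t, ht.image f, fun y hy hfy => ?_⟩
  have hclosed : IsClosed {w : E | ‖w‖ ≤ ‖w - y‖} :=
    isClosed_le continuous_norm (continuous_id.sub continuous_const).norm
  have hsub : t ⊆ {w : E | ‖w‖ ≤ ‖w - y‖} := fun w hw => calc
    ‖w‖ = ‖f w (w - y)‖ := by
      rw [map_sub, hfy _ (Set.mem_image_of_mem f hw), sub_zero, hf_apply, RCLike.norm_ofReal,
        abs_norm]
    _ ≤ 1 * ‖w - y‖ := (f w).le_of_opNorm_le (hf_norm w) _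
    _ = ‖w - y‖ := one_mul _
  simpa using closure_minimal hsub hclosed (hst hy)

variable {𝕜}

theorem isSeqCompact_weakSpace_of_isSeparable {K : Set (WeakSpace 𝕜 E)} (hK : IsCompact K)
    (hsep : TopologicalSpace.IsSeparable (toWeakSpace 𝕜 E ⁻¹' K)) : IsSeqCompact K := by
  obtain ⟨D, hD, hD_sep⟩ := exists_countable_dual_separating 𝕜 (hsep.span (R := 𝕜))
  let _ : Encodable D := hD.toEncodable
  have : CompactSpace K := isCompact_iff_compactSpace.mp hK
  have : TopologicalSpace.MetrizableSpace K := by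
    refine Metric.PiNatEmbed.TopologicalSpace.MetrizableSpace.of_countable_separating
      (fun (f : D) (y : K) => f.1 ((toWeakSpace 𝕜 E).symm y))
      (fun f => (WeakBilin.eval_continuous (topDualPairing 𝕜 E).flip f.1).comp
        continuous_subtype_val) fun y z hyz => ?_
    by_contra! hD_eq
    refine hyz (Subtype.ext ((toWeakSpace 𝕜 E).symm.injective (sub_eq_zero.1 ?_)))
    refine hD_sep _ (Submodule.sub_mem _ ?_ ?_) fun f hf => ?_
    · exact Submodule.subset_span y.2
    · exact Submodule.subset_span z.2
    · rw [map_sub, hD_eq ⟨f, hf⟩, sub_self]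
  simpa using IsSeqCompact.range (f := ((↑) : K → WeakSpace 𝕜 E))
    continuous_subtype_val.seqContinuous

theorem isClosed_image_toWeakSpace {Y : Submodule 𝕜 E} (hY : IsClosed (Y : Set E)) :
    IsClosed (toWeakSpace 𝕜 E '' Y) := by
  let _ : NormedSpace ℝ E := NormedSpace.restrictScalars ℝ 𝕜 E
  have : IsScalarTower ℝ 𝕜 E := RestrictScalars.isScalarTower ℝ 𝕜 E
  have hYc : Convex ℝ (Y : Set E) := (Y.restrictScalars ℝ).convex
  rw [← closure_eq_iff_isClosed, ← hYc.toWeakSpace_closure 𝕜, hY.closure_eq]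

theorem isSeqCompact_weakSpace_of_isCompact {K : Set (WeakSpace 𝕜 E)} (hK : IsCompact K) :
    IsSeqCompact K := by
  intro y hy
  let Y : Submodule 𝕜 E :=
    (Submodule.span 𝕜 (Set.range fun n => (toWeakSpace 𝕜 E).symm (y n))).topologicalClosure
  have hY_sep : TopologicalSpace.IsSeparable (Y : Set E) :=
    ((Set.countable_range _).isSeparable.span (R := 𝕜)).closure
  have hY_closed : IsClosed (toWeakSpace 𝕜 E '' Y) :=
    isClosed_image_toWeakSpace (Submodule.isClosed_topologicalClosure _)
  have hyY : ∀ n, y n ∈ toWeakSpace 𝕜 E '' Y := fun n =>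
    ⟨_, Submodule.le_topologicalClosure _ (Submodule.subset_span ⟨n, rfl⟩), rfl⟩
  have hKY : IsSeqCompact (K ∩ toWeakSpace 𝕜 E '' Y) :=
    isSeqCompact_weakSpace_of_isSeparable (hK.inter_right hY_closed) <| hY_sep.mono <| by
      rintro w ⟨-, v, hv, hvw⟩
      exact (toWeakSpace 𝕜 E).injective hvw ▸ hv
  obtain ⟨c, hc, φ, hφ, hlim⟩ := hKY fun n => ⟨hy n, hyY n⟩
  exact ⟨c, hc.1, φ, hφ, hlim⟩

end Smulian

theorem mapClusterPt_cofinite_of_mem_closure_range {ι Y : Type*} [TopologicalSpace Y] [T1Space Y]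
    {u : ι → Y} {a : Y} (ha : a ∈ closure (Set.range u)) (ha' : a ∉ Set.range u) :
    MapClusterPt a cofinite u := by
  refine mapClusterPt_iff_frequently.2 fun s hs => frequently_cofinite_iff_infinite.2 fun hfin => ?_
  have hmem : s ∩ (u '' {i | u i ∈ s})ᶜ ∈ 𝓝 a :=
    inter_mem hs ((hfin.image u).isClosed.compl_mem_nhds fun ⟨i, _, hi⟩ => ha' ⟨i, hi⟩)
  obtain ⟨_, ⟨his, hi⟩, i, rfl⟩ := mem_closure_iff_nhds.1 ha _ hmem
  exact hi ⟨i, his, rfl⟩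

theorem exists_strictMono_forall_lt_mem_of_mapClusterPt {Y : Type*} [TopologicalSpace Y]
    {u : ℕ → Y} {a : Y} (ha : MapClusterPt a atTop u) {V : ℕ → Set Y} (hV : ∀ n, V n ∈ 𝓝 a) :
    ∃ φ : ℕ → ℕ, StrictMono φ ∧ ∀ i j, i < j → u (φ j) ∈ V (φ i) := by
  obtain ⟨φ, -, hφ⟩ := exists_seq_of_forall_finset_exists (fun _ => True)
    (fun m n => m < n ∧ u n ∈ V m) fun s _ => by
      have hmem : ∀ᶠ y in 𝓝 a, ∀ m ∈ s, y ∈ V m := (eventually_all_finset s).2 fun m _ => hV m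
      have hlt : ∀ᶠ n in atTop, ∀ m ∈ s, m < n :=
        (eventually_all_finset s).2 fun m _ => eventually_gt_atTop m
      obtain ⟨n, hn_mem, hn_lt⟩ := ((ha.frequently hmem).and_eventually hlt).exists
      exact ⟨n, trivial, fun m hm => ⟨hn_lt m hm, hn_mem m hm⟩⟩
  exact ⟨φ, fun i j hij => (hφ i j hij).1, fun i j hij => (hφ i j hij).2⟩

section Bidual

variable (𝕜 : Type*) {E : Type*} [RCLike 𝕜] [NormedAddCommGroup E] [NormedSpace 𝕜 E]

/-- The canonical embedding of a normed space into its bidual, from the norm topology to the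
weak-star topology. Composing with `WeakDual.toStrongDual` gives back
`NormedSpace.inclusionInDoubleDual`. -/
noncomputable def weakStarInclusion : E →L[𝕜] WeakDual 𝕜 (StrongDual 𝕜 E) :=
  (NormedSpace.inclusionInDoubleDualWeak 𝕜 E).comp (toWeakSpaceCLM 𝕜 E)

variable {𝕜}

theorem exists_pos_forall_lt_norm_sub_weakStarInclusion [CompleteSpace E]
    {F : WeakDual 𝕜 (StrongDual 𝕜 E)} (hF : F ∉ Set.range (weakStarInclusion 𝕜 (E := E))) :
    ∃ θ > 0, ∀ u : E, θ < ‖WeakDual.toStrongDual (F - weakStarInclusion 𝕜 u)‖ := by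
  let J := NormedSpace.inclusionInDoubleDualLi (E := E) 𝕜
  have hclosed : IsClosed (Set.range J) := J.isometry.isUniformInducing.isComplete_range.isClosed
  have hF_notMem : WeakDual.toStrongDual F ∉ Set.range J := hF
  obtain ⟨θ, hθ_pos, hθ⟩ :=
    exists_between ((hclosed.notMem_iff_infDist_pos (Set.range_nonempty J)).1 hF_notMem)
  refine ⟨θ, hθ_pos, fun u => hθ.trans_le ?_⟩
  exact (Metric.infDist_le_dist_of_mem (Set.mem_range_self u)).trans_eq
    (dist_eq_norm (E := StrongDual 𝕜 (StrongDual 𝕜 E)) _ _)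

theorem exists_mapClusterPt_weakStarInclusion_notMem_range {x : ℕ → E}
    (hb : Bornology.IsBounded (Set.range x))
    (hx : ¬ ∃ c : E, ∃ φ : ℕ → ℕ, StrictMono φ ∧
      Tendsto (toWeakSpace 𝕜 E ∘ x ∘ φ) atTop (𝓝 (toWeakSpace 𝕜 E c))) :
    ∃ F ∉ Set.range (weakStarInclusion 𝕜 (E := E)),
      MapClusterPt F atTop (weakStarInclusion 𝕜 ∘ x) := by
  let S : Set (WeakSpace 𝕜 E) := toWeakSpace 𝕜 E '' Set.range x
  have hS_bounded : Bornology.IsBounded (toWeakSpace 𝕜 E ⁻¹' S) := by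
    rwa [Set.preimage_image_eq _ (toWeakSpace 𝕜 E).injective]
  have hS_image : NormedSpace.inclusionInDoubleDualWeak 𝕜 E '' S =
      Set.range (weakStarInclusion 𝕜 ∘ x) := by
    rw [Set.range_comp, Set.image_image]
    rfl
  have hS_not_compact : ¬ IsCompact (closure S) := fun hS => by
    obtain ⟨c, -, φ, hφ, hc⟩ := isSeqCompact_weakSpace_of_isCompact hS
      fun n => subset_closure (Set.mem_image_of_mem _ (Set.mem_range_self n))
    exact hx ⟨(toWeakSpace 𝕜 E).symm c, φ, hφ, hc⟩
  obtain ⟨F, hF, hF_range⟩ := Set.not_subset.1 <|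
    mt (NormedSpace.isCompact_closure_of_isBounded 𝕜 E S hS_bounded) hS_not_compact
  refine ⟨F, hF_range, ?_⟩
  rw [← Nat.cofinite_eq_atTop]
  exact mapClusterPt_cofinite_of_mem_closure_range (hS_image ▸ hF) fun hFx =>
    hF_range (Set.range_comp_subset_range _ _ hFx)

end Bidual

section James

variable {E : Type*} [NormedAddCommGroup E] [NormedSpace ℝ E]

theorem exists_convex_mem_nhds_forall_lt_norm_sub {K : Set (WeakDual ℝ E)} (hK : IsCompact K)
    {F : WeakDual ℝ E} {r : ℝ} (hF : ∀ G ∈ K, r < ‖WeakDual.toStrongDual (F - G)‖) :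
    ∃ V ∈ 𝓝 F, Convex ℝ V ∧ ∀ G ∈ K, ∀ H ∈ V, r < ‖WeakDual.toStrongDual (H - G)‖ := by
  let B : Set (WeakDual ℝ E) := WeakDual.toStrongDual ⁻¹' Metric.closedBall 0 r
  have hB {G : WeakDual ℝ E} : G ∈ B ↔ ‖WeakDual.toStrongDual G‖ ≤ r :=
    mem_closedBall_zero_iff (E := StrongDual ℝ E)
  have hclosed : IsClosed (K + B) := (hK.add (WeakDual.isCompact_closedBall 0 r)).isClosed
  have hF_notMem : F ∉ K + B := by
    rintro ⟨G, hG, H, hH, rfl⟩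
    exact (hF G hG).not_ge (by simpa [hB] using hH)
  have : LocallyConvexSpace ℝ (WeakDual ℝ E) := (WeakDual.withSeminorms ℝ E).toLocallyConvexSpace
  obtain ⟨V, ⟨hV, hV_convex⟩, hV_sub⟩ :=
    (LocallyConvexSpace.convex_basis (𝕜 := ℝ) F).mem_iff.1 (hclosed.compl_mem_nhds hF_notMem)
  refine ⟨V, hV, hV_convex, fun G hG H hH => ?_⟩
  by_contra! hHG
  exact hV_sub hH ⟨G, hG, H - G, hB.2 hHG, add_sub_cancel _ _⟩

theorem exists_mem_nhds_forall_convexHull_lt_norm_sub {K : Set E} (hK : IsCompact K)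
    {F : WeakDual ℝ (StrongDual ℝ E)} {r : ℝ}
    (hF : ∀ u ∈ K, r < ‖WeakDual.toStrongDual (F - weakStarInclusion ℝ u)‖) :
    ∃ V ∈ 𝓝 F, ∀ u ∈ K, ∀ v ∈ convexHull ℝ (weakStarInclusion ℝ ⁻¹' V), r < ‖u - v‖ := by
  obtain ⟨V, hV, hV_convex, hV_sep⟩ := exists_convex_mem_nhds_forall_lt_norm_sub
    (hK.image (weakStarInclusion ℝ).continuous) (Set.forall_mem_image.2 hF)
  have hpre_convex : Convex ℝ (weakStarInclusion ℝ ⁻¹' V) :=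
    hV_convex.linear_preimage (weakStarInclusion ℝ).toLinearMap
  refine ⟨V, hV, fun u hu v hv => ?_⟩
  rw [hpre_convex.convexHull_eq] at hv
  calc
    r < ‖NormedSpace.inclusionInDoubleDual ℝ E (v - u)‖ := by
      rw [map_sub]; exact hV_sep _ (Set.mem_image_of_mem _ hu) _ hv
    _ ≤ ‖v - u‖ := NormedSpace.double_dual_bound ℝ E _
    _ = ‖u - v‖ := norm_sub_rev v u

/-- The James condition with constant `θ`. The terms are indexed from `0`, so the first hull is that
of `y 0, …, y k`. -/
def JamesCondition (θ : ℝ) (y : ℕ → E) : Prop :=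
  ∀ k, ∀ u ∈ convexHull ℝ (y '' {i | i ≤ k}), ∀ v ∈ convexHull ℝ (y '' {i | k < i}), θ ≤ ‖u - v‖

theorem exists_subseq_jamesCondition_of_mapClusterPt {x : ℕ → E}
    {F : WeakDual ℝ (StrongDual ℝ E)} (hF : MapClusterPt F atTop (weakStarInclusion ℝ ∘ x))
    {θ : ℝ} (hθ : ∀ u : E, θ < ‖WeakDual.toStrongDual (F - weakStarInclusion ℝ u)‖) :
    ∃ φ : ℕ → ℕ, StrictMono φ ∧ JamesCondition θ (x ∘ φ) := by
  have hcompact (n : ℕ) : IsCompact (convexHull ℝ (x '' Set.Iic n)) :=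
    ((Set.finite_Iic n).image x).isCompact_convexHull (𝕜 := ℝ)
  choose V hV hV_sep using fun n =>
    exists_mem_nhds_forall_convexHull_lt_norm_sub (hcompact n) fun u _ => hθ u
  obtain ⟨φ, hφ, hφV⟩ := exists_strictMono_forall_lt_mem_of_mapClusterPt hF hV
  refine ⟨φ, hφ, fun k u hu v hv => (hV_sep (φ k) u ?_ v ?_).le⟩
  · refine convexHull_mono ?_ hu
    rintro _ ⟨i, hi, rfl⟩
    exact ⟨φ i, hφ.monotone hi, rfl⟩
  · refine convexHull_mono ?_ hv
    rintro _ ⟨i, hi, rfl⟩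
    exact hφV k i hi

end James

/-- A bounded sequence with no weakly convergent subsequence has a subsequence satisfying the
James condition. -/
theorem exists_subseq_james_condition [CompleteSpace X]
    (x : ℕ → X) (hb : Bornology.IsBounded (Set.range x))
    (h : ¬ ∃ c : X, ∃ φ : ℕ → ℕ, StrictMono φ ∧ WeakTendsto (x ∘ φ) c) :
    ∃ φ : ℕ → ℕ, StrictMono φ ∧ ∃ θ > (0 : ℝ), ∀ k : ℕ,
      ∀ u ∈ convexHull ℝ ((x ∘ φ) '' {i | i ≤ k}),
      ∀ v ∈ convexHull ℝ ((x ∘ φ) '' {i | k < i}), θ ≤ ‖u - v‖ := by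
  simp only [weakTendsto_iff_tendsto_toWeakSpace] at h
  obtain ⟨F, hF_range, hF⟩ := exists_mapClusterPt_weakStarInclusion_notMem_range hb h
  obtain ⟨θ, hθ_pos, hθ⟩ := exists_pos_forall_lt_norm_sub_weakStarInclusion hF_range
  obtain ⟨φ, hφ, hφ_james⟩ := exists_subseq_jamesCondition_of_mapClusterPt hF hθ
  exact ⟨φ, hφ, θ, hθ_pos, hφ_james⟩
end
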